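/- (Theorem 5) For (p+1)-variate data with univariate nonresponse given by real numbers X_i^(1),…,X_i^(p) and R_i ∈ {0,1}, i = 1,…,n, with 0 < R̄_n < 1 (where R̄_n = n⁻¹∑R_i) and with the maximum-likelihood sample covariance matrix S̃ of the X-columns (entries S̃_{uv} = n⁻¹∑_i X_i^(u)X_i^(v) − X̄^(u)X̄^(v)) invertible, the novel statistic equals Little's statistic: A_n = d². Here A_n = n·T̃·Σ̃^(−1)·T̃ᵀ, where T̃ = (T̃^(1),…,T̃^(p)) with T̃^(u) = X̄^(u)·R̄_n − n⁻¹∑_i X_i^(u)R_i and Σ̃ = R̄_n(1−R̄_n)·S̃; and d² = n·R̄_n·L·S̃^(−1)·Lᵀ + n·(1−R̄_n)·L₁'·S̃^(−1)·L₁'ᵀ, where L is the vector with components L^(u) = (∑_i X_i^(u)R_i)/(∑_i R_i) − X̄^(u) (mean of X^(u) over observed rows minus overall mean) and L₁' is the vector with components (∑_i X_i^(u)(1−R_i))/(∑_i (1−R_i)) − X̄^(u) (mean of X^(u) over rows with missing Y minus overall mean). -/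

import Mathlib

open Finset

/-- **Theorem 5.** For `(p+1)`-variate data with univariate nonresponse —
complete columns `X⁽¹⁾,…,X⁽ᵖ⁾` and binary response indicators `R_i ∈ {0,1}` with
`0 < R̄_n < 1` and invertible maximum-likelihood sample covariance matrix `S̃` of the
`X`-columns — the novel statistic equals Little's statistic: `A_n = d²`. -/
theorem An_eq_Little_d2
    (n p : ℕ)
    (X : Fin p → Fin n → ℝ) (R : Fin n → ℝ)
    (hR01 : ∀ i, R i = 0 ∨ R i = 1)
    (Xbar : Fin p → ℝ) (hXbar : ∀ u, Xbar u = (n : ℝ)⁻¹ * ∑ i, X u i)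
    (Rbar : ℝ) (hRbar : Rbar = (n : ℝ)⁻¹ * ∑ i, R i)
    (hRbar0 : 0 < Rbar) (hRbar1 : Rbar < 1)
    (S : Matrix (Fin p) (Fin p) ℝ)
    (hS : S = Matrix.of fun u v => (n : ℝ)⁻¹ * ∑ i, X u i * X v i - Xbar u * Xbar v)
    (hSinv : IsUnit S)
    (T : Fin p → ℝ)
    (hT : ∀ u, T u = Xbar u * Rbar - (n : ℝ)⁻¹ * ∑ i, X u i * R i)
    (Sig : Matrix (Fin p) (Fin p) ℝ)
    (hSig : Sig = (Rbar * (1 - Rbar)) • S)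
    (A : ℝ)
    (hA : A = (n : ℝ) * ∑ u : Fin p, ∑ v : Fin p, T u * Sig⁻¹ u v * T v)
    (L L₁ : Fin p → ℝ)
    (hL : ∀ u, L u = (∑ i, X u i * R i) / (∑ i, R i) - Xbar u)
    (hL₁ : ∀ u, L₁ u = (∑ i, X u i * (1 - R i)) / (∑ i, (1 - R i)) - Xbar u)
    (d2 : ℝ)
    (hd2 : d2 = (n : ℝ) * Rbar * (∑ u : Fin p, ∑ v : Fin p, L u * S⁻¹ u v * L v)
      + (n : ℝ) * (1 - Rbar) * (∑ u : Fin p, ∑ v : Fin p, L₁ u * S⁻¹ u v * L₁ v)) :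
    A = d2 := by
  have hn : (n : ℝ) ≠ 0 := by
    intro h
    rw [h] at hRbar
    simp at hRbar
    linarith
  have h0 : Rbar ≠ 0 := hRbar0.ne'
  have h1 : 1 - Rbar ≠ 0 := by linarith
  have hc : Rbar * (1 - Rbar) ≠ 0 := mul_ne_zero h0 h1
  have hdet : IsUnit S.det := (Matrix.isUnit_iff_isUnit_det S).mp hSinv
  have hSigInv : Sig⁻¹ = (Rbar * (1 - Rbar))⁻¹ • S⁻¹ := by
    apply Matrix.inv_eq_right_inv
    rw [hSig, Matrix.smul_mul, Matrix.mul_smul, smul_smul, mul_inv_cancel₀ hc, one_smul,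
      Matrix.mul_nonsing_inv S hdet]
  have hsR : ∑ i, R i = n * Rbar := by
    rw [hRbar]; field_simp
  have hsX : ∀ u, ∑ i, X u i = n * Xbar u := by
    intro u; rw [hXbar]; field_simp
  have hsXR : ∀ u, ∑ i, X u i * R i = n * (Xbar u * Rbar - T u) := by
    intro u; rw [hT]; field_simp; ring
  have hL' : ∀ u, L u = -(T u / Rbar) := by
    intro u; rw [hL, hsXR, hsR]; field_simp; ring
  have hL₁' : ∀ u, L₁ u = T u / (1 - Rbar) := by
    intro u
    have e1 : ∑ i, X u i * (1 - R i) = n * (Xbar u * (1 - Rbar) + T u) := by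
      simp only [mul_sub, mul_one, Finset.sum_sub_distrib]
      rw [hsX, hsXR]; ring
    have e2 : ∑ i, (1 - R i) = n * (1 - Rbar) := by
      rw [Finset.sum_sub_distrib, hsR]; simp; ring
    rw [hL₁, e1, e2]; field_simp; ring
  rw [hA, hd2]
  simp only [Finset.mul_sum, ← Finset.sum_add_distrib]
  refine Finset.sum_congr rfl fun u _ => Finset.sum_congr rfl fun v _ => ?_
  rw [hSigInv, hL', hL', hL₁', hL₁', Matrix.smul_apply, smul_eq_mul]
  field_simp
  ring
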